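/- Let X be an ∞-pseudo-metric space with APD profile (1,α) and let Y be an ∞-pseudo-metric space such that for every t > 0, Y is a finite union of subsets of scale-t-dimension 0. If Y is of scale-r-dimension 0 for some r > 0, then for every s ≥ r the product X × Y with the supremum ∞-pseudo-metric decomposes as Z_0 ∪ Z_1, where Z_0 is of scale-r-dimension 0 and Z_1 is the union of at most ⌊α(r)⌋ subsets of scale-s-dimension 0. -/

import Mathlib

open Set
open scoped ENNReal

/-- `y` is joined to `x` by a scale-`r`-chain in `A`: a finite sequence of points of `A`
starting at `x` and ending at `y`, consecutive points of which have intersecting open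
`r`-balls. -/
def ScaleChain {X : Type*} [PseudoEMetricSpace X] (r : ℝ) (A : Set X) (x y : X) : Prop :=
  ∃ n : ℕ, ∃ c : ℕ → X, (∀ i ≤ n, c i ∈ A) ∧ c 0 = x ∧ c n = y ∧
    ∀ i < n,
      (EMetric.ball (c i) (ENNReal.ofReal r) ∩
        EMetric.ball (c (i + 1)) (ENNReal.ofReal r)).Nonempty

/-- The scale-`r`-component of `x` in `A`: all points of `A` joined to `x` by a
scale-`r`-chain in `A`. -/
def ScaleComponent {X : Type*} [PseudoEMetricSpace X] (r : ℝ) (A : Set X) (x : X) : Set X :=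
  {y | ScaleChain r A x y}

/-- `A` has scale-`r`-dimension `0`: there is a finite bound on the diameters of all
scale-`r`-components of `A`. -/
def ScaleDimZero {X : Type*} [PseudoEMetricSpace X] (r : ℝ) (A : Set X) : Prop :=
  ∃ M : ℝ≥0∞, M ≠ ⊤ ∧ ∀ x ∈ A, EMetric.diam (ScaleComponent r A x) ≤ M

/-- `A` is the union of at most `n` subsets of scale-`s`-dimension `0`. -/
def UnionAtMost {X : Type*} [PseudoEMetricSpace X] (n : ℕ) (s : ℝ) (A : Set X) : Prop :=
  ∃ G : Fin n → Set X, A = ⋃ j, G j ∧ ∀ j, ScaleDimZero s (G j)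

/-- `(1, α)` is an APD profile of `X`: for all reals `0 < r ≤ s` there is a decomposition
`X = X₀ ∪ X₁` with `X₀` of scale-`r`-dimension `0` and `X₁` the union of at most `⌊α r⌋`
subsets of scale-`s`-dimension `0`. -/
def APDPair (X : Type*) [PseudoEMetricSpace X] (α : ℝ → ℝ) : Prop :=
  ∀ r s : ℝ, 0 < r → r ≤ s →
    ∃ X₀ X₁ : Set X, X₀ ∪ X₁ = univ ∧ ScaleDimZero r X₀ ∧ UnionAtMost (Nat.floor (α r)) s X₁

/-- The open `r`-balls around `x` and `y` intersect. -/
def ScaleStep {X : Type*} [PseudoEMetricSpace X] (r : ℝ) (x y : X) : Prop :=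
  (Metric.eball x (ENNReal.ofReal r) ∩ Metric.eball y (ENNReal.ofReal r)).Nonempty

section

variable {X Y I : Type*} [PseudoEMetricSpace X] [PseudoEMetricSpace Y]

theorem scaleStep_iff {r : ℝ} {x y : X} :
    ScaleStep r x y ↔ ∃ z, edist z x < ENNReal.ofReal r ∧ edist z y < ENNReal.ofReal r :=
  Iff.rfl

theorem ScaleStep.symm {r : ℝ} {x y : X} (h : ScaleStep r x y) : ScaleStep r y x := by
  obtain ⟨z, hx, hy⟩ := h
  exact ⟨z, hy, hx⟩

theorem ScaleStep.edist_lt {r : ℝ} (hr : 0 ≤ r) {x y : X} (h : ScaleStep r x y) :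
    edist x y < ENNReal.ofReal (2 * r) := by
  obtain ⟨z, hx, hy⟩ := scaleStep_iff.1 h
  rw [two_mul, ENNReal.ofReal_add hr hr]
  exact (edist_triangle_left x y z).trans_lt (ENNReal.add_lt_add hx hy)

theorem ScaleStep.fst {r : ℝ} {p q : X × Y} (h : ScaleStep r p q) : ScaleStep r p.1 q.1 := by
  obtain ⟨z, hp, hq⟩ := scaleStep_iff.1 h
  exact scaleStep_iff.2 ⟨z.1, (le_max_left _ _).trans_lt hp, (le_max_left _ _).trans_lt hq⟩

theorem ScaleStep.snd {r : ℝ} {p q : X × Y} (h : ScaleStep r p q) : ScaleStep r p.2 q.2 := by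
  obtain ⟨z, hp, hq⟩ := scaleStep_iff.1 h
  exact scaleStep_iff.2 ⟨z.2, (le_max_right _ _).trans_lt hp, (le_max_right _ _).trans_lt hq⟩

/-- A map that sends steps in `A` to steps in `B` sends chains in `A` to chains in `B`. -/
theorem ScaleChain.map {r s : ℝ} {A : Set X} {B : Set Y} (f : X → Y) (hf : MapsTo f A B)
    (hstep : ∀ x ∈ A, ∀ y ∈ A, ScaleStep r x y → ScaleStep s (f x) (f y)) {x y : X}
    (h : ScaleChain r A x y) : ScaleChain s B (f x) (f y) := by
  obtain ⟨n, c, hA, rfl, rfl, hc⟩ := h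
  exact ⟨n, f ∘ c, fun i hi => hf (hA i hi), rfl, rfl,
    fun i hi => hstep _ (hA i hi.le) _ (hA (i + 1) hi) (hc i hi)⟩

theorem ScaleChain.mono {r : ℝ} {A B : Set X} (hAB : A ⊆ B) {x y : X}
    (h : ScaleChain r A x y) : ScaleChain r B x y :=
  h.map id hAB fun _ _ _ _ h => h

/-- A chain in `A` stays in any set containing its starting point and closed under steps
in `A`. -/
theorem ScaleChain.inter {r : ℝ} {A P : Set X}
    (hP : ∀ x ∈ A, ∀ y ∈ A, ScaleStep r x y → x ∈ P → y ∈ P) {x y : X} (hx : x ∈ P)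
    (h : ScaleChain r A x y) : ScaleChain r (A ∩ P) x y := by
  obtain ⟨n, c, hA, rfl, rfl, hc⟩ := h
  have key : ∀ i ≤ n, c i ∈ P := by
    intro i
    induction i with
    | zero => exact fun _ => hx
    | succ i ih => exact fun hi => hP _ (hA i (by lia)) _ (hA _ hi) (hc i hi) (ih (by lia))
  exact ⟨n, c, fun i hi => ⟨hA i hi, key i hi⟩, rfl, rfl, hc⟩

theorem ScaleChain.refl {r : ℝ} {A : Set X} {x : X} (hx : x ∈ A) : ScaleChain r A x x :=
  ⟨0, fun _ => x, fun _ _ => hx, rfl, rfl, fun _ h => absurd h (Nat.not_lt_zero _)⟩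

theorem ScaleChain.left_mem {r : ℝ} {A : Set X} {x y : X} (h : ScaleChain r A x y) : x ∈ A := by
  obtain ⟨n, c, hA, rfl, -, -⟩ := h
  exact hA 0 (Nat.zero_le n)

theorem ScaleChain.right_mem {r : ℝ} {A : Set X} {x y : X} (h : ScaleChain r A x y) : y ∈ A := by
  obtain ⟨n, c, hA, -, rfl, -⟩ := h
  exact hA n le_rfl

theorem ScaleChain.tail {r : ℝ} {A : Set X} {x y z : X} (h : ScaleChain r A x y)
    (hyz : ScaleStep r y z) (hz : z ∈ A) : ScaleChain r A x z := by
  obtain ⟨n, c, hA, rfl, rfl, hc⟩ := h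
  refine ⟨n + 1, fun i => if i ≤ n then c i else z, fun i _ => ?_, by simp, by simp,
    fun i hi => ?_⟩
  · dsimp only
    split_ifs with h
    exacts [hA i h, hz]
  · change ScaleStep r _ _
    rcases Nat.lt_succ_iff_lt_or_eq.1 hi with h | rfl
    · have hi : ScaleStep r (c i) (c (i + 1)) := hc i h
      simpa [h.le, Nat.succ_le_of_lt h] using hi
    · simpa using hyz

theorem ScaleChain.of_reflTransGen {r : ℝ} {x y : X}
    (h : Relation.ReflTransGen (ScaleStep r) x y) : ScaleChain r univ x y := by
  induction h with
  | refl => exact .refl (mem_univ _)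
  | tail _ h ih => exact ih.tail h (mem_univ _)

theorem scaleDimZero_iff {r : ℝ} {A : Set X} :
    ScaleDimZero r A ↔ ∃ M : ℝ≥0∞, M ≠ ⊤ ∧ ∀ x y, ScaleChain r A x y → edist x y ≤ M := by
  constructor
  · rintro ⟨M, hM, h⟩
    exact ⟨M, hM, fun x y hxy =>
      (Metric.edist_le_ediam_of_mem (s := ScaleComponent r A x) (ScaleChain.refl hxy.left_mem)
        hxy).trans (h x hxy.left_mem)⟩
  · rintro ⟨M, hM, h⟩
    refine ⟨M + M, ENNReal.add_ne_top.2 ⟨hM, hM⟩, fun x _ => Metric.ediam_le fun y hy z hz => ?_⟩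
    exact (edist_triangle_left y z x).trans (add_le_add (h x y hy) (h x z hz))

/-- If every point of `B` is `b`-close to `A`, then scale-dimension `0` passes from `A` at scale
`S` to `B` at scale `s`, provided `s + b ≤ S`. -/
theorem ScaleDimZero.of_near {s b S : ℝ} (hs : 0 ≤ s) (hb : 0 ≤ b) (hS : s + b ≤ S) {A B : Set X}
    (hA : ScaleDimZero S A) (hB : ∀ x ∈ B, ∃ a ∈ A, edist x a < ENNReal.ofReal b) :
    ScaleDimZero s B := by
  obtain ⟨M, hM, hA⟩ := scaleDimZero_iff.1 hA
  choose! f hfA hf using hB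
  have hclose : ∀ x ∈ B, ∀ z, edist z x < ENNReal.ofReal s →
      edist z (f x) < ENNReal.ofReal S := fun x hx z hz =>
    calc edist z (f x) ≤ edist z x + edist x (f x) := edist_triangle _ _ _
      _ < ENNReal.ofReal s + ENNReal.ofReal b := ENNReal.add_lt_add hz (hf x hx)
      _ = ENNReal.ofReal (s + b) := (ENNReal.ofReal_add hs hb).symm
      _ ≤ ENNReal.ofReal S := ENNReal.ofReal_le_ofReal hS
  refine scaleDimZero_iff.2
    ⟨ENNReal.ofReal b + M + ENNReal.ofReal b, by simp [hM], fun x y hxy => ?_⟩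
  have hfxy : ScaleChain S A (f x) (f y) := by
    refine hxy.map f hfA fun u hu v hv huv => ?_
    obtain ⟨z, hzu, hzv⟩ := scaleStep_iff.1 huv
    exact scaleStep_iff.2 ⟨z, hclose u hu z hzu, hclose v hv z hzv⟩
  calc edist x y ≤ edist x (f x) + edist (f x) (f y) + edist (f y) y := edist_triangle4 _ _ _ _
    _ ≤ _ := by
      gcongr
      · exact (hf x hxy.left_mem).le
      · exact hA _ _ hfxy
      · rw [edist_comm]
        exact (hf y hxy.right_mem).le

/-- Chains of `A` remaining in one of finitely many sets of scale-dimension `0` are uniformly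
bounded. -/
theorem ScaleDimZero.of_finite [Finite I] {r : ℝ} {A : Set X} {V : I → Set X}
    (hV : ∀ i, ScaleDimZero r (V i))
    (h : ∀ x y, ScaleChain r A x y → ∃ i, ScaleChain r (V i) x y) : ScaleDimZero r A := by
  have := Fintype.ofFinite I
  choose M hM hV using fun i => scaleDimZero_iff.1 (hV i)
  refine scaleDimZero_iff.2 ⟨∑ i, M i, by simp [hM], fun x y hxy => ?_⟩
  obtain ⟨i, hi⟩ := h x y hxy
  exact (hV i x y hi).trans (Finset.single_le_sum (fun _ _ => zero_le) (Finset.mem_univ i))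

theorem ScaleDimZero.prod {r : ℝ} {A : Set X} {B : Set Y} (hA : ScaleDimZero r A)
    (hB : ScaleDimZero r B) : ScaleDimZero r (A ×ˢ B) := by
  obtain ⟨M, hM, hA⟩ := scaleDimZero_iff.1 hA
  obtain ⟨N, hN, hB⟩ := scaleDimZero_iff.1 hB
  refine scaleDimZero_iff.2 ⟨max M N, by simp [hM, hN], fun p q hpq => ?_⟩
  exact max_le_max
    (hA _ _ (hpq.map Prod.fst (fun _ h => h.1) fun _ _ _ _ h => h.fst))
    (hB _ _ (hpq.map Prod.snd (fun _ h => h.2) fun _ _ _ _ h => h.snd))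

/-- A subset of `X × Y` whose fibre colouring `κ` is constant along steps has scale-dimension `0`
as soon as every colour class lies in a product of sets of scale-dimension `0`. -/
theorem ScaleDimZero.of_coloring [Finite I] {r : ℝ} {A : Set (X × Y)} (κ : Y → I)
    {U : I → Set X} {V : I → Set Y} (hU : ∀ i, ScaleDimZero r (U i))
    (hV : ∀ i, ScaleDimZero r (V i)) (hA : ∀ p ∈ A, p.1 ∈ U (κ p.2) ∧ p.2 ∈ V (κ p.2))
    (hκ : ∀ p ∈ A, ∀ q ∈ A, ScaleStep r p q → κ p.2 = κ q.2) : ScaleDimZero r A := by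
  refine .of_finite (fun i => (hU i).prod (hV i)) fun p q hpq => ⟨κ p.2, ?_⟩
  refine (hpq.inter (P := {z : X × Y | κ z.2 = κ p.2})
    (fun u hu v hv huv h => (hκ u hu v hv huv).symm.trans h) rfl).mono ?_
  rintro z ⟨hz, hzp⟩
  obtain ⟨h₁, h₂⟩ := hA z hz
  rw [show κ z.2 = κ p.2 from hzp] at h₁ h₂
  exact ⟨h₁, h₂⟩

/-- The points whose distance to `A` lies in `[a, b)`. -/
def distShell (a b : ℝ) (A : Set X) : Set X :=
  {x | ENNReal.ofReal a ≤ Metric.infEDist x A ∧ Metric.infEDist x A < ENNReal.ofReal b}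

theorem ScaleStep.infEDist_lt {r a : ℝ} (hr : 0 ≤ r) (ha : 0 ≤ a) {A : Set X} {x y : X}
    (h : ScaleStep r x y) (hx : Metric.infEDist x A < ENNReal.ofReal a) :
    Metric.infEDist y A < ENNReal.ofReal (a + 2 * r) := by
  rw [ENNReal.ofReal_add ha (by positivity)]
  exact Metric.infEDist_le_infEDist_add_edist.trans_lt
    (ENNReal.add_lt_add hx (h.symm.edist_lt hr))

theorem ScaleDimZero.distShell {s a b S : ℝ} (hs : 0 ≤ s) (hb : 0 ≤ b) (hS : s + b ≤ S)
    {A : Set X} (hA : ScaleDimZero S A) : ScaleDimZero s (distShell a b A) :=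
  .of_near hs hb hS hA fun _ hx => Metric.infEDist_lt_iff.1 hx.2

/-- Removing shells of width `2 * r` around sets that together with `X₀` cover the space leaves
a set of scale-`r`-dimension `0`. -/
theorem ScaleDimZero.compl_iUnion_distShell [Finite I] {r a S : ℝ} (hr : 0 ≤ r) (ha : 0 < a)
    (hS : r + a ≤ S) {X₀ : Set X} {G : I → Set X} (hcover : X₀ ∪ ⋃ j, G j = univ)
    (hX₀ : ScaleDimZero r X₀) (hG : ∀ j, ScaleDimZero S (G j)) :
    ScaleDimZero r (⋃ j, _root_.distShell a (a + 2 * r) (G j))ᶜ := by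
  have hshell : ∀ x ∈ (⋃ j, _root_.distShell a (a + 2 * r) (G j))ᶜ, ∀ j,
      Metric.infEDist x (G j) < ENNReal.ofReal (a + 2 * r) →
      Metric.infEDist x (G j) < ENNReal.ofReal a := fun x hx j hj =>
    not_le.1 fun h => hx (mem_iUnion.2 ⟨j, h, hj⟩)
  refine .of_finite
    (V := fun o : Option I => o.elim X₀ fun j => {x | Metric.infEDist x (G j) < ENNReal.ofReal a})
    (fun o => ?_) fun x y hxy => ?_
  · cases o with
    | none => exact hX₀
    | some j => exact .of_near hr ha.le hS (hG j) fun _ hx => Metric.infEDist_lt_iff.1 hx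
  · by_cases hx : ∃ j, Metric.infEDist x (G j) < ENNReal.ofReal a
    · obtain ⟨j, hj⟩ := hx
      exact ⟨some j, (hxy.inter (P := {x | Metric.infEDist x (G j) < ENNReal.ofReal a})
        (fun u _ v hv huv hu => hshell v hv j (huv.infEDist_lt hr ha.le hu)) hj).mono
        inter_subset_right⟩
    · refine ⟨none, (hxy.inter (P := {x | ¬ ∃ j, Metric.infEDist x (G j) < ENNReal.ofReal a})
        ?_ hx).mono ?_⟩
      · rintro u hu v - huv h ⟨j, hj⟩
        exact h ⟨j, hshell u hu j (huv.symm.infEDist_lt hr ha.le hj)⟩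
      · rintro z ⟨-, hz⟩
        refine (hcover.symm.subset (mem_univ z)).resolve_right fun h => hz ?_
        obtain ⟨j, hj⟩ := mem_iUnion.1 h
        exact ⟨j, by simpa [Metric.infEDist_zero_of_mem hj] using ha⟩

/-- A space of scale-`r`-dimension `0` that is a finite union of sets of scale-`t`-dimension `0`
for every `t` can be finitely coloured so that colours are constant on scale-`r`-components and
colour classes have scale-`s`-dimension `0`. -/
theorem exists_coloring_of_scaleDimZero
    (hYfin : ∀ t : ℝ, 0 < t → ∃ n : ℕ, ∃ F : Fin n → Set Y,
      (⋃ i, F i) = univ ∧ ∀ i, ScaleDimZero t (F i))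
    {r s : ℝ} (hs : 0 < s) (hY : ScaleDimZero r (univ : Set Y)) :
    ∃ n : ℕ, ∃ κ : Y → Fin n, (∀ y z, ScaleStep r y z → κ y = κ z) ∧
      ∀ i, ScaleDimZero s (κ ⁻¹' {i}) := by
  obtain ⟨M, hM, hY⟩ := scaleDimZero_iff.1 hY
  obtain ⟨n, F, hF, hF₀⟩ := hYfin (s + (M.toReal + 1)) (by positivity)
  choose c hc using fun y => mem_iUnion.1 (hF.symm.subset (mem_univ y))
  have : Std.Symm (ScaleStep r : Y → Y → Prop) := ⟨fun _ _ => ScaleStep.symm⟩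
  let T : Setoid Y := ⟨Relation.ReflTransGen (ScaleStep r), fun _ => .refl,
    fun h => symm_of _ h, .trans⟩
  refine ⟨n, fun y => c (Quotient.mk T y).out, fun y z h => ?_, fun i => ?_⟩
  · exact congrArg (fun q => c (Quotient.out q))
      (Quotient.sound (s := T) (Relation.ReflTransGen.single h))
  · refine .of_near hs.le (by positivity) le_rfl (hF₀ i) fun y hy =>
      ⟨(Quotient.mk T y).out, mem_singleton_iff.1 hy ▸ hc _, ?_⟩
    rw [edist_comm]
    refine (hY _ _ (.of_reflTransGen (Quotient.mk_out (s := T) y))).trans_lt ?_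
    rw [ENNReal.lt_ofReal_iff_toReal_lt hM]
    exact lt_add_one _

end

/-- Let `X` be an `∞`-pseudo-metric space with APD profile `(1, α)` and let `Y` be an
`∞`-pseudo-metric space such that for every `t > 0`, `Y` is a finite union of subsets of
scale-`t`-dimension `0`. If `Y` is of scale-`r`-dimension `0` for some `r > 0`, then for every
`s ≥ r` the product `X × Y` with the supremum `∞`-pseudo-metric decomposes as `Z₀ ∪ Z₁`,
where `Z₀` is of scale-`r`-dimension `0` and `Z₁` is the union of at most `⌊α r⌋` subsets of
scale-`s`-dimension `0`. -/
theorem prod_decomposition_of_apdPair {X Y : Type*} [PseudoEMetricSpace X]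
    [PseudoEMetricSpace Y] (α : ℝ → ℝ)
    (hαmono : MonotoneOn α (Set.Ioi (0 : ℝ))) (hαnonneg : ∀ t : ℝ, 0 < t → 0 ≤ α t)
    (hX : APDPair X α)
    (hYfin : ∀ t : ℝ, 0 < t → ∃ n : ℕ, ∃ F : Fin n → Set Y,
      (⋃ i, F i) = univ ∧ ∀ i, ScaleDimZero t (F i))
    (r : ℝ) (hr : 0 < r) (hY : ScaleDimZero r (univ : Set Y)) :
    ∀ s : ℝ, r ≤ s →
      ∃ Z₀ Z₁ : Set (X × Y), Z₀ ∪ Z₁ = univ ∧ ScaleDimZero r Z₀ ∧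
        UnionAtMost (Nat.floor (α r)) s Z₁ := by
  intro s hrs
  have hs : 0 < s := hr.trans_le hrs
  obtain ⟨n, κ, hκ, hκ₀⟩ := exists_coloring_of_scaleDimZero hYfin hs hY
  -- The shells of colours `i ≠ i'` are at distance at least `2 * s` from each other.
  let a : ℕ → ℝ := fun i => (i + 1) * (2 * r + 2 * s)
  have ha : ∀ i, 0 < a i := fun i => by positivity
  have hlt : ∀ i j, i < j → a i + 2 * r + 2 * s ≤ a j := fun i j hij => by
    have : (i : ℝ) + 1 ≤ j := mod_cast hij
    simp only [a]
    nlinarith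
  obtain ⟨X₀, X₁, hcover, hX₀, G, rfl, hG⟩ := hX r (a n) hr (by
    simp only [a]; nlinarith [(n.cast_nonneg : (0 : ℝ) ≤ n)])
  let D : Fin n → Fin ⌊α r⌋₊ → Set X := fun i j => distShell (a i) (a i + 2 * r) (G j)
  have hD : ∀ j (i i' : Fin n), i < i' → ∀ x ∈ D i j, ∀ y ∈ D i' j, ¬ ScaleStep s x y := by
    intro j i i' hii x hx y hy hxy
    refine hy.1.not_gt ((hxy.infEDist_lt hs.le (by linarith [ha i]) hx.2).trans_le ?_)
    exact ENNReal.ofReal_le_ofReal (hlt _ _ hii)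
  let Z : Fin ⌊α r⌋₊ → Set (X × Y) := fun j => {p | p.1 ∈ D (κ p.2) j}
  refine ⟨(⋃ j, Z j)ᶜ, ⋃ j, Z j, compl_union_self _, ?_, Z, rfl, fun j => ?_⟩
  · refine .of_coloring κ (U := fun i => (⋃ j, D i j)ᶜ) (V := fun _ => univ)
      (fun i => ?_) (fun _ => hY) (fun p hp => ⟨?_, mem_univ _⟩)
      fun p _ q _ h => hκ _ _ h.snd
    · exact .compl_iUnion_distShell hr.le (ha i) (by linarith [hlt i n i.2]) hcover hX₀ hG
    · simpa [Z] using hp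
  · refine .of_coloring κ (U := fun i => D i j) (fun i => ?_) hκ₀
      (fun p hp => ⟨hp, rfl⟩) fun p hp q hq h => ?_
    · exact (hG j).distShell hs.le (by linarith [ha i]) (by linarith [hlt i n i.2])
    · rcases lt_trichotomy (κ p.2) (κ q.2) with hlt | heq | hgt
      · exact (hD j _ _ hlt _ hp _ hq h.fst).elim
      · exact heq
      · exact (hD j _ _ hgt _ hq _ hp h.fst.symm).elim
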